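/- arXiv:2604.05862 — 3 statements merged into one kernel-verified Lean document; each statement's English description precedes it below -/
import Mathlib

section
/- Delaying the future (pattern form): Let M be a valid message pattern, θ a node, Δ > 0, and φ = φ_{θ,Δ} the shift map. Then for all nodes θ₁ and θ₂: θ₁ ⤳ θ₂ with respect to M if and only if φ(θ₁) ⤳ φ(θ₂) with respect to φ(M). Moreover, φ fixes every node of past(θ) ∪ {θ}, and moves every other node (j,m) to (j, m+Δ), i.e., delays it by exactly Δ. -/
/-- The happens-before relation of a message pattern `M`: the transitive closure of
"same process, strictly earlier time" together with the messages of `M`. -/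
def hb {ι : Type*} (M : Set ((ι × ℕ) × (ι × ℕ))) : (ι × ℕ) → (ι × ℕ) → Prop :=
  Relation.TransGen (fun θ θ' => (θ.1 = θ'.1 ∧ θ.2 < θ'.2) ∨ (θ, θ') ∈ M)

/-- A message pattern is valid if every message is sent strictly before it is delivered. -/
def ValidPattern {ι : Type*} (M : Set ((ι × ℕ) × (ι × ℕ))) : Prop :=
  ∀ m ∈ M, m.1.2 < m.2.2

/-- The past of a node `θ`: all nodes with a message chain to `θ`. -/
def past {ι : Type*} (M : Set ((ι × ℕ) × (ι × ℕ))) (θ : ι × ℕ) : Set (ι × ℕ) :=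
  {θ' | hb M θ' θ}

open scoped Classical in
/-- The shift map `φ_{θ,Δ}`: fixes `past(θ) ∪ {θ}`, delays every other node by `Δ`. -/
noncomputable def shiftMap {ι : Type*} (M : Set ((ι × ℕ) × (ι × ℕ))) (θ : ι × ℕ) (Δ : ℕ)
    (ν : ι × ℕ) : ι × ℕ :=
  if ν ∈ past M θ ∨ ν = θ then ν else (ν.1, ν.2 + Δ)

/-- The message pattern obtained by applying the shift map to both endpoints of
every message of `M`. -/
noncomputable def shiftPattern {ι : Type*} (M : Set ((ι × ℕ) × (ι × ℕ))) (θ : ι × ℕ)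
    (Δ : ℕ) : Set ((ι × ℕ) × (ι × ℕ)) :=
  (fun m => (shiftMap M θ Δ m.1, shiftMap M θ Δ m.2)) '' M

/-!
The shift map never changes the process of a node, and it is strictly increasing on every timeline
because `past(θ) ∪ {θ}` is closed under passing to earlier nodes; hence it preserves and reflects
"same process, strictly earlier". This already suffices for happens-before to be preserved and
reflected. A chain of `φ(M)` between shifted nodes may visit nodes outside the range of `φ`, but it
leaves the range only by local steps, and consecutive local steps compose to a single local step
between nodes in the range, which can be pulled back.
-/

section TransGen

open Relation

variable {α β : Type*} {r m : α → α → Prop} {s : β → β → Prop}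

theorem rel_trans_reflGen [IsTrans α r] {a b c : α} (hab : r a b) (hbc : ReflGen r b c) :
    r a c := by
  obtain _ | hbc := hbc
  · exact hab
  · exact IsTrans.trans _ _ _ hab hbc

theorem reflGen_of_reflGen_apply (f : r ↪r s) {a b : α} (h : ReflGen s (f a) (f b)) :
    ReflGen r a b := by
  rw [reflGen_iff] at h ⊢
  exact h.imp (fun heq ↦ f.injective heq) f.map_rel_iff.mp

theorem transGen_sup_of_rel_of_reflGen {a b c d : α} (hab : ReflTransGen (r ⊔ m) a b)
    (hbc : m b c) (hcd : ReflGen r c d) : TransGen (r ⊔ m) a d :=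
  (TransGen.tail' hab (.inr hbc)).trans_left (hcd.mono le_sup_left _ _).to_reflTransGen

-- The chain from `f a` may end at a point `y` outside the range of `f`; allowing for one more
-- `s`-step back into the range makes the induction on the chain go through.
theorem transGen_sup_of_transGen_sup_map [IsTrans β s] (f : r ↪r s) {a b : α} {y : β}
    (hay : TransGen (s ⊔ Relation.Map m f f) (f a) y) (hyb : ReflGen s y (f b)) :
    TransGen (r ⊔ m) a b := by
  induction hay generalizing b with
  | single hstep =>
    obtain hs | ⟨u, v, huv, hua, rfl⟩ := hstep
    · exact .single (.inl (f.map_rel_iff.mp (rel_trans_reflGen hs hyb)))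
    · obtain rfl := f.injective hua
      exact transGen_sup_of_rel_of_reflGen .refl huv (reflGen_of_reflGen_apply f hyb)
  | tail _ hstep ih =>
    obtain hs | ⟨u, v, huv, rfl, rfl⟩ := hstep
    · exact ih (.single (rel_trans_reflGen hs hyb))
    · have hau : TransGen (r ⊔ m) a u := ih .refl
      exact transGen_sup_of_rel_of_reflGen hau.to_reflTransGen huv (reflGen_of_reflGen_apply f hyb)

theorem transGen_sup_map_iff [IsTrans β s] (f : r ↪r s) {a b : α} :
    TransGen (s ⊔ Relation.Map m f f) (f a) (f b) ↔ TransGen (r ⊔ m) a b := by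
  refine ⟨fun hab ↦ transGen_sup_of_transGen_sup_map f hab .refl,
    fun hab ↦ TransGen.lift f ?_ _ _ hab⟩
  rintro c d (hr | hm)
  · exact .inl (f.map_rel_iff.mpr hr)
  · exact .inr ⟨c, d, hm, rfl, rfl⟩

end TransGen

/-- The local order of a message-passing system: two nodes are related if they belong to the same
process and the first is strictly earlier. It is the part of happens-before that does not depend
on the message pattern. -/
def LocallyBefore {ι : Type*} (a b : ι × ℕ) : Prop :=
  a.1 = b.1 ∧ a.2 < b.2

instance {ι : Type*} : IsTrans (ι × ℕ) LocallyBefore where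
  trans _ _ _ hab hbc := ⟨hab.1.trans hbc.1, hab.2.trans hbc.2⟩

theorem LocallyBefore.hb {ι : Type*} {M : Set ((ι × ℕ) × (ι × ℕ))} {a b : ι × ℕ}
    (hab : LocallyBefore a b) : hb M a b :=
  .single (.inl hab)

theorem hb_image_iff {ι κ : Type*} {M : Set ((ι × ℕ) × (ι × ℕ))}
    (f : (LocallyBefore : ι × ℕ → ι × ℕ → Prop) ↪r (LocallyBefore : κ × ℕ → κ × ℕ → Prop))
    {a b : ι × ℕ} : hb (Prod.map f f '' M) (f a) (f b) ↔ hb M a b := by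
  have image_eq_map : (fun x y ↦ (x, y) ∈ Prod.map f f '' M) =
      Relation.Map (fun x y ↦ (x, y) ∈ M) f f := by
    ext x y
    simp [Relation.Map]
  change Relation.TransGen (LocallyBefore ⊔ fun x y ↦ (x, y) ∈ Prod.map f f '' M) _ _ ↔ _
  rw [image_eq_map]
  exact transGen_sup_map_iff f

section ShiftMap

variable {ι : Type*} {M : Set ((ι × ℕ) × (ι × ℕ))} {θ : ι × ℕ} {Δ : ℕ}

theorem mem_past_union_singleton_of_hb {a b : ι × ℕ} (hab : hb M a b) (hbθ : b ∈ past M θ ∪ {θ}) :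
    a ∈ past M θ ∪ {θ} := by
  obtain hb_past | rfl := hbθ
  · exact .inl (hab.trans hb_past)
  · exact .inl hab

theorem shiftMap_of_mem {ν : ι × ℕ} (hν : ν ∈ past M θ ∪ {θ}) : shiftMap M θ Δ ν = ν :=
  if_pos hν

theorem shiftMap_of_notMem {ν : ι × ℕ} (hν : ν ∉ past M θ ∪ {θ}) :
    shiftMap M θ Δ ν = (ν.1, ν.2 + Δ) :=
  if_neg hν

variable (M θ Δ)

theorem shiftMap_fst (ν : ι × ℕ) : (shiftMap M θ Δ ν).1 = ν.1 := by
  unfold shiftMap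
  split_ifs <;> rfl

theorem le_shiftMap_snd (ν : ι × ℕ) : ν.2 ≤ (shiftMap M θ Δ ν).2 := by
  unfold shiftMap
  split_ifs <;> simp

theorem strictMono_shiftMap_snd (p : ι) : StrictMono fun t ↦ (shiftMap M θ Δ (p, t)).2 := by
  intro s t hst
  have hlocal : LocallyBefore (p, s) (p, t) := ⟨rfl, hst⟩
  by_cases hs : (p, s) ∈ past M θ ∪ {θ}
  · simpa only [shiftMap_of_mem hs] using hst.trans_le (le_shiftMap_snd M θ Δ (p, t))
  · have ht : (p, t) ∉ past M θ ∪ {θ} := mt (mem_past_union_singleton_of_hb hlocal.hb) hs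
    simpa only [shiftMap_of_notMem hs, shiftMap_of_notMem ht] using Nat.add_lt_add_right hst Δ

theorem shiftMap_injective : Function.Injective (shiftMap M θ Δ) := by
  rintro ⟨p, s⟩ ⟨q, t⟩ heq
  obtain rfl : p = q := by simpa only [shiftMap_fst] using congrArg Prod.fst heq
  rw [(strictMono_shiftMap_snd M θ Δ p).injective (congrArg Prod.snd heq)]

theorem locallyBefore_shiftMap_iff (a b : ι × ℕ) :
    LocallyBefore (shiftMap M θ Δ a) (shiftMap M θ Δ b) ↔ LocallyBefore a b := by
  obtain ⟨p, s⟩ := a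
  obtain ⟨q, t⟩ := b
  simp only [LocallyBefore, shiftMap_fst]
  refine and_congr_right ?_
  rintro rfl
  exact (strictMono_shiftMap_snd M θ Δ p).lt_iff_lt

/-- The shift map `φ_{θ,Δ}`, bundled as an embedding of the local order into itself. -/
noncomputable def shiftEmbedding :
    (LocallyBefore : ι × ℕ → ι × ℕ → Prop) ↪r (LocallyBefore : ι × ℕ → ι × ℕ → Prop) where
  toFun := shiftMap M θ Δ
  inj' := shiftMap_injective M θ Δ
  map_rel_iff' := locallyBefore_shiftMap_iff M θ Δ _ _

end ShiftMap

theorem delaying_the_future_general {ι : Type*} (M : Set ((ι × ℕ) × (ι × ℕ))) (θ : ι × ℕ) (Δ : ℕ) :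
    (∀ θ₁ θ₂ : ι × ℕ,
      hb M θ₁ θ₂ ↔ hb (shiftPattern M θ Δ) (shiftMap M θ Δ θ₁) (shiftMap M θ Δ θ₂)) ∧
    (∀ ν ∈ past M θ ∪ {θ}, shiftMap M θ Δ ν = ν) ∧
    (∀ ν : ι × ℕ, ν ∉ past M θ ∪ {θ} → shiftMap M θ Δ ν = (ν.1, ν.2 + Δ)) :=
  ⟨fun _ _ ↦ (hb_image_iff (shiftEmbedding M θ Δ)).symm, fun _ ↦ shiftMap_of_mem,
    fun _ ↦ shiftMap_of_notMem⟩

/-- Delaying the future (pattern form): `θ₁ ⤳ θ₂` w.r.t. `M` iff `φ(θ₁) ⤳ φ(θ₂)`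
w.r.t. `φ(M)`; moreover `φ` fixes every node of `past(θ) ∪ {θ}` and delays every
other node `(j,m)` to `(j, m+Δ)`. -/
theorem delaying_the_future {ι : Type*} (M : Set ((ι × ℕ) × (ι × ℕ)))
    (hM : ValidPattern M) (θ : ι × ℕ) (Δ : ℕ) (hΔ : 0 < Δ) :
    (∀ θ₁ θ₂ : ι × ℕ,
      hb M θ₁ θ₂ ↔ hb (shiftPattern M θ Δ) (shiftMap M θ Δ θ₁) (shiftMap M θ Δ θ₂)) ∧
    (∀ ν ∈ past M θ ∪ {θ}, shiftMap M θ Δ ν = ν) ∧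
    (∀ ν : ι × ℕ, ν ∉ past M θ ∪ {θ} → shiftMap M θ Δ ν = (ν.1, ν.2 + Δ)) :=
  delaying_the_future_general M θ Δ
end

section
/- Reordering theorem (pattern form): Let M be a valid message pattern and let X = (p, s_X, e_X) and Y = (q, s_Y, e_Y) be operations with s_X ≤ e_Y, ¬(X mc Y) (i.e., ¬(X.s ⤳ Y.e)), and X.s ≠ Y.e. Set θ = Y.e, Δ = e_Y − s_X + 1, and φ = φ_{θ,Δ}. Then: (i) φ fixes both Y.s and Y.e, while φ(X.s) = (p, e_Y + 1) and φ(X.e) = (p, e_X + Δ); in particular, after the shift Y precedes X. (ii) For every operation Z = (z, s_Z, e_Z) with e_X < s_Z, ¬(Z.s ⤳ Y.e) and Z.s ≠ Y.e, the time of φ(X.e) is strictly less than the time of φ(Z.s); in particular, after the shift X still precedes Z. -/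
/-! The set of nodes fixed by the shift is closed under going back in time along a process. Hence
`Y.s` is fixed together with `Y.e`, and `X.e` is delayed together with `X.s`; the delay is exactly
what carries `X.s` from time `s_X` to time `e_Y + 1`. No node is delayed by more than `Δ`, so a
node delayed by exactly `Δ` stays after every node it came after. -/

section

variable {ι : Type*} {M : Set ((ι × ℕ) × (ι × ℕ))} {θ ν ν' : ι × ℕ} {r : ι} {s t Δ : ℕ}

theorem hb_of_lt (hst : s < t) : hb M (r, s) (r, t) :=
  .single (.inl ⟨rfl, hst⟩)

theorem mem_past_or_eq_of_le (hst : s ≤ t) (ht : (r, t) ∈ past M θ ∨ (r, t) = θ) :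
    (r, s) ∈ past M θ ∨ (r, s) = θ := by
  obtain rfl | hlt := hst.eq_or_lt
  · exact ht
  · obtain hpast | rfl := ht
    · exact .inl ((hb_of_lt hlt).trans hpast)
    · exact .inl (hb_of_lt hlt)

theorem shiftMap_eq_self (h : ν ∈ past M θ ∨ ν = θ) : shiftMap M θ Δ ν = ν :=
  if_pos h

theorem shiftMap_eq_add (h : ¬(ν ∈ past M θ ∨ ν = θ)) :
    shiftMap M θ Δ ν = (ν.1, ν.2 + Δ) :=
  if_neg h

theorem shiftMap_snd_le : (shiftMap M θ Δ ν).2 ≤ ν.2 + Δ := by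
  by_cases h : ν ∈ past M θ ∨ ν = θ
  · rw [shiftMap_eq_self h]
    exact Nat.le_add_right _ _
  · rw [shiftMap_eq_add h]

theorem shiftMap_snd_lt_shiftMap_snd (hlt : ν.2 < ν'.2) (hν' : ¬(ν' ∈ past M θ ∨ ν' = θ)) :
    (shiftMap M θ Δ ν).2 < (shiftMap M θ Δ ν').2 :=
  calc
    (shiftMap M θ Δ ν).2 ≤ ν.2 + Δ := shiftMap_snd_le
    _ < ν'.2 + Δ := Nat.add_lt_add_right hlt Δ
    _ = (shiftMap M θ Δ ν').2 := by rw [shiftMap_eq_add hν']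

end

theorem reordering_general {ι : Type*} (M : Set ((ι × ℕ) × (ι × ℕ))) (p q : ι)
    (sX eX sY eY : ℕ) (hX : sX ≤ eX) (hY : sY ≤ eY) (hse : sX ≤ eY)
    (hmc : ¬ hb M (p, sX) (q, eY)) (hne : (p, sX) ≠ (q, eY)) :
    (shiftMap M (q, eY) (eY - sX + 1) (q, sY) = (q, sY) ∧
     shiftMap M (q, eY) (eY - sX + 1) (q, eY) = (q, eY) ∧
     shiftMap M (q, eY) (eY - sX + 1) (p, sX) = (p, eY + 1) ∧
     shiftMap M (q, eY) (eY - sX + 1) (p, eX) = (p, eX + (eY - sX + 1)) ∧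
     (shiftMap M (q, eY) (eY - sX + 1) (q, eY)).2 <
       (shiftMap M (q, eY) (eY - sX + 1) (p, sX)).2) ∧
    (∀ (z : ι) (sZ : ℕ), eX < sZ →
      ¬ hb M (z, sZ) (q, eY) → (z, sZ) ≠ (q, eY) →
      (shiftMap M (q, eY) (eY - sX + 1) (p, eX)).2 <
        (shiftMap M (q, eY) (eY - sX + 1) (z, sZ)).2) := by
  have hXs : ¬((p, sX) ∈ past M (q, eY) ∨ (p, sX) = (q, eY)) := not_or_intro hmc hne
  have hXe : ¬((p, eX) ∈ past M (q, eY) ∨ (p, eX) = (q, eY)) :=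
    mt (mem_past_or_eq_of_le hX) hXs
  have fix_Ys : shiftMap M (q, eY) (eY - sX + 1) (q, sY) = (q, sY) :=
    shiftMap_eq_self (mem_past_or_eq_of_le hY (.inr rfl))
  have fix_Ye : shiftMap M (q, eY) (eY - sX + 1) (q, eY) = (q, eY) :=
    shiftMap_eq_self (.inr rfl)
  have move_Xs : shiftMap M (q, eY) (eY - sX + 1) (p, sX) = (p, eY + 1) := by
    rw [shiftMap_eq_add hXs, ← Nat.add_assoc, Nat.add_sub_cancel' hse]
  refine ⟨⟨fix_Ys, fix_Ye, move_Xs, shiftMap_eq_add hXe, ?_⟩, ?_⟩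
  · rw [fix_Ye, move_Xs]
    exact Nat.lt_succ_self eY
  · intro z sZ hlt hmcZ hneZ
    exact shiftMap_snd_lt_shiftMap_snd hlt (not_or_intro hmcZ hneZ)

/-- Reordering theorem (pattern form): shifting with pivot `θ = Y.e` and delay
`Δ = e_Y - s_X + 1` fixes `Y.s` and `Y.e`, moves `X.s` to `(p, e_Y + 1)` and `X.e`
to `(p, e_X + Δ)` — so after the shift `Y` precedes `X` — and any operation `Z`
that `X` precedes and that has no message chain to `Y.e` is still preceded by `X`
after the shift. -/
theorem reordering {ι : Type*} (M : Set ((ι × ℕ) × (ι × ℕ))) (hM : ValidPattern M)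
    (p q : ι) (sX eX sY eY : ℕ) (hX : sX ≤ eX) (hY : sY ≤ eY) (hse : sX ≤ eY)
    (hmc : ¬ hb M (p, sX) (q, eY)) (hne : (p, sX) ≠ (q, eY)) :
    (shiftMap M (q, eY) (eY - sX + 1) (q, sY) = (q, sY) ∧
     shiftMap M (q, eY) (eY - sX + 1) (q, eY) = (q, eY) ∧
     shiftMap M (q, eY) (eY - sX + 1) (p, sX) = (p, eY + 1) ∧
     shiftMap M (q, eY) (eY - sX + 1) (p, eX) = (p, eX + (eY - sX + 1)) ∧
     (shiftMap M (q, eY) (eY - sX + 1) (q, eY)).2 <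
       (shiftMap M (q, eY) (eY - sX + 1) (p, sX)).2) ∧
    (∀ (z : ι) (sZ eZ : ℕ), sZ ≤ eZ → eX < sZ →
      ¬ hb M (z, sZ) (q, eY) → (z, sZ) ≠ (q, eY) →
      (shiftMap M (q, eY) (eY - sX + 1) (p, eX)).2 <
        (shiftMap M (q, eY) (eY - sX + 1) (z, sZ)).2) := by
  obtain ⟨hXY, hXZ⟩ := reordering_general M p q sX eX sY eY hX hY hse hmc hne
  exact ⟨hXY, fun z sZ _ _ => hXZ z sZ⟩
end

section
/- No-a-b-a lemma for linearizable histories: Let S be a finite set of timed operations over a value type α and let H be a linearization of S in which values are written at most once. Let X, Y, Z ∈ S be timed operations whose register operations involve the values a, b, c : Option α respectively, and suppose e_X < s_Y and e_Y < s_Z (X precedes Y and Y precedes Z in real time). If a ≠ b, then a ≠ c. -/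
/-- A register operation: a write of a value `v : α`, or a read returning
`w : Option α` (`read none` models reading the initial default value `⊥`). -/
inductive RegOp (α : Type*) where
  | write (v : α)
  | read (w : Option α)
  deriving DecidableEq

/-- The value of the last write in a list of register operations (`none` if there is
no write). -/
def lastWritten {α : Type*} (H : List (RegOp α)) : Option α :=
  H.foldl (fun acc op => match op with | .write v => some v | .read _ => acc) none

/-- A sequential history `H` is an atomic register history if every read returns the
most recently written value (and `none` if no value was written before it). -/
def IsAtomicHistory {α : Type*} (H : List (RegOp α)) : Prop :=
  ∀ (k : ℕ) (w : Option α), H[k]? = some (RegOp.read w) → w = lastWritten (H.take k)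

/-- Values are written at most once in `H`: no two distinct positions hold writes of
the same value. -/
def WrittenAtMostOnce {α : Type*} (H : List (RegOp α)) : Prop :=
  ∀ (i j : ℕ) (v : α), H[i]? = some (RegOp.write v) → H[j]? = some (RegOp.write v) → i = j

/-- An operation involves `w : Option α` if it is `read w`, or a `write v` with
`w = some v`. -/
def Involves {α : Type*} (op : RegOp α) (w : Option α) : Prop :=
  op = RegOp.read w ∨ ∃ v : α, op = RegOp.write v ∧ w = some v

/-- A timed operation: a register operation with an invocation time `s` and a
response time `e`, where `s ≤ e`. -/
structure TimedOp (α : Type*) where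
  op : RegOp α
  s : ℕ
  e : ℕ
  le : s ≤ e

/-- `H` is a linearization of a finite set `S` of timed operations: `H` is an atomic
register history whose entries are exactly the register operations of the elements of
`S`, via a bijection `σ` from `S` to the positions of `H`, which respects the
real-time precedence order (`e_X < s_Y` implies `σ X < σ Y`). -/
def IsLinearization {α : Type*} (S : Finset (TimedOp α)) (H : List (RegOp α)) : Prop :=
  IsAtomicHistory H ∧ ∃ σ : {x // x ∈ S} ≃ Fin H.length,
    (∀ x : {x // x ∈ S}, H.get (σ x) = x.1.op) ∧
    (∀ x y : {x // x ∈ S}, x.1.e < y.1.s → (σ x : ℕ) < (σ y : ℕ))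

/-!
In an atomic history, an operation involves `w` exactly when `w` is the last written value right
after it. The last written value changes only through a write of its new value. If it left `a` and
came back, `a` would be some `v` written once before leaving (the initial value is `⊥`) and once
more on the return, at two different positions.
-/

section LastWritten

variable {α : Type*} {H : List (RegOp α)}

theorem lastWritten_take_succ_of_write {k : ℕ} {v : α} (h : H[k]? = some (.write v)) :
    lastWritten (H.take (k + 1)) = some v := by
  simp [lastWritten, List.take_add_one, h]

theorem lastWritten_take_succ_of_read {k : ℕ} {w : Option α} (h : H[k]? = some (.read w)) :
    lastWritten (H.take (k + 1)) = lastWritten (H.take k) := by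
  simp [lastWritten, List.take_add_one, h]

theorem exists_write_of_lastWritten_take_ne {p q : ℕ} (hpq : p ≤ q)
    (hne : lastWritten (H.take p) ≠ lastWritten (H.take q)) :
    ∃ t v, p ≤ t ∧ t < q ∧ H[t]? = some (.write v) ∧ lastWritten (H.take q) = some v := by
  induction q, hpq using Nat.le_induction with
  | base => exact absurd rfl hne
  | succ n hpn ih =>
    have of_unchanged (hn : lastWritten (H.take (n + 1)) = lastWritten (H.take n)) :
        ∃ t v, p ≤ t ∧ t < n + 1 ∧ H[t]? = some (.write v) ∧
          lastWritten (H.take (n + 1)) = some v := by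
      rw [hn] at hne ⊢
      obtain ⟨t, v, hpt, htn, hwrite, hlast⟩ := ih hne
      exact ⟨t, v, hpt, htn.trans n.lt_succ_self, hwrite, hlast⟩
    match hop : H[n]? with
    | none => exact of_unchanged (by simp [List.take_add_one, hop])
    | some (.read _) => exact of_unchanged (lastWritten_take_succ_of_read hop)
    | some (.write v) =>
      exact ⟨n, v, hpn, n.lt_succ_self, hop, lastWritten_take_succ_of_write hop⟩

theorem exists_write_of_lastWritten_take_eq_some {q : ℕ} {v : α}
    (h : lastWritten (H.take q) = some v) : ∃ t < q, H[t]? = some (.write v) := by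
  have hne : lastWritten (H.take 0) ≠ lastWritten (H.take q) := by
    rw [h]
    simp [lastWritten]
  obtain ⟨t, u, -, htq, hwrite, hlast⟩ := exists_write_of_lastWritten_take_ne q.zero_le hne
  obtain rfl : u = v := Option.some.inj (hlast.symm.trans h)
  exact ⟨t, htq, hwrite⟩

theorem WrittenAtMostOnce.lastWritten_take_ne (hOnce : WrittenAtMostOnce H) {i j k : ℕ}
    (hij : i ≤ j) (hjk : j ≤ k) (hne : lastWritten (H.take i) ≠ lastWritten (H.take j)) :
    lastWritten (H.take i) ≠ lastWritten (H.take k) := by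
  intro heq
  obtain ⟨t, v, hjt, -, hwrite, hlast⟩ :=
    exists_write_of_lastWritten_take_ne hjk (heq ▸ hne.symm)
  obtain ⟨s, hsi, hwrite_s⟩ := exists_write_of_lastWritten_take_eq_some (heq.trans hlast)
  have hst : s = t := hOnce s t v hwrite_s hwrite
  lia

theorem IsAtomicHistory.lastWritten_take_succ (hA : IsAtomicHistory H) {k : ℕ} {op : RegOp α}
    {w : Option α} (hop : H[k]? = some op) (hw : Involves op w) :
    lastWritten (H.take (k + 1)) = w := by
  rcases hw with rfl | ⟨v, rfl, rfl⟩
  · exact (lastWritten_take_succ_of_read hop).trans (hA k w hop).symm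
  · exact lastWritten_take_succ_of_write hop

theorem IsAtomicHistory.no_aba (hA : IsAtomicHistory H) (hOnce : WrittenAtMostOnce H)
    {i j k : ℕ} (hij : i ≤ j) (hjk : j ≤ k) {x y z : RegOp α}
    (hx : H[i]? = some x) (hy : H[j]? = some y) (hz : H[k]? = some z) {a b c : Option α}
    (ha : Involves x a) (hb : Involves y b) (hc : Involves z c) (hab : a ≠ b) : a ≠ c := by
  rw [← hA.lastWritten_take_succ hx ha] at hab ⊢
  rw [← hA.lastWritten_take_succ hy hb] at hab
  rw [← hA.lastWritten_take_succ hz hc]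
  exact hOnce.lastWritten_take_ne (Nat.succ_le_succ hij) (Nat.succ_le_succ hjk) hab

end LastWritten

/-- No-a-b-a lemma for linearizable histories: if `H` is a linearization of `S` in
which values are written at most once, `X, Y, Z ∈ S` involve values `a`, `b`, `c`
respectively, `X` precedes `Y` and `Y` precedes `Z` in real time, and `a ≠ b`,
then `a ≠ c`. -/
theorem no_aba_linearizable {α : Type*} (S : Finset (TimedOp α)) (H : List (RegOp α))
    (hLin : IsLinearization S H) (hOnce : WrittenAtMostOnce H)
    (X Y Z : TimedOp α) (hX : X ∈ S) (hY : Y ∈ S) (hZ : Z ∈ S)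
    (a b c : Option α)
    (ha : Involves X.op a) (hb : Involves Y.op b) (hc : Involves Z.op c)
    (hXY : X.e < Y.s) (hYZ : Y.e < Z.s) (hab : a ≠ b) : a ≠ c := by
  obtain ⟨hA, σ, hσ, hord⟩ := hLin
  have getElem?_σ (x : {x // x ∈ S}) : H[(σ x : ℕ)]? = some x.1.op := by
    simp [← hσ x]
  exact hA.no_aba hOnce (hord ⟨X, hX⟩ ⟨Y, hY⟩ hXY).le (hord ⟨Y, hY⟩ ⟨Z, hZ⟩ hYZ).le
    (getElem?_σ _) (getElem?_σ _) (getElem?_σ _) ha hb hc hab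
end
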